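/- Let F : ℝ → ℝ be differentiable and bounded from below. Suppose there exist constants C₃ > 0, C₄ ≥ 0 and an exponent r ∈ (1,2] such that |F'(s)|^r ≤ C₃ |F(s)| + C₄ for all s ∈ ℝ. Then, writing r' = r/(r−1) ∈ [2,∞) for the conjugate exponent of r, there exist constants C₅ > 0 and C₆ ≥ 0 such that |F(s)| ≤ C₅ |s|^{r'} + C₆ for all s ∈ ℝ. -/

import Mathlib

/-- Remark 2.4 of the paper: if `F : ℝ → ℝ` is differentiable and bounded from below,
and satisfies `|F'(s)|^r ≤ C₃ |F(s)| + C₄` for some `C₃ > 0`, `C₄ ≥ 0`, `r ∈ (1,2]`,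
then `F` has polynomial growth of order `r' = r/(r-1)`:
there exist `C₅ > 0`, `C₆ ≥ 0` with `|F(s)| ≤ C₅ |s|^{r'} + C₆` for all `s`. -/
theorem remark_polynomial_growth
    (F : ℝ → ℝ) (hF : Differentiable ℝ F)
    (hbdd : BddBelow (Set.range F))
    (C₃ C₄ r : ℝ) (hC₃ : 0 < C₃) (hC₄ : 0 ≤ C₄) (hr1 : 1 < r) (hr2 : r ≤ 2)
    (hgrowth : ∀ s : ℝ, |deriv F s| ^ r ≤ C₃ * |F s| + C₄) :
    ∃ C₅ C₆ : ℝ, 0 < C₅ ∧ 0 ≤ C₆ ∧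
      ∀ s : ℝ, |F s| ≤ C₅ * |s| ^ (r / (r - 1)) + C₆ := by
  obtain ⟨m, hm⟩ := hbdd
  have hFm : ∀ s, m ≤ F s := fun s => hm ⟨s, rfl⟩
  have hr0 : 0 < r := by linarith
  have hq0 : 0 < r - 1 := by linarith
  set G : ℝ → ℝ := fun s => F s + 2 * |m| + 1 with hG
  have hFG : ∀ s, |F s| + 1 ≤ G s := by
    intro s
    have h1 := hFm s
    have h2 := neg_abs_le m
    have h3 := abs_nonneg m
    have : |F s| ≤ F s + 2 * |m| := by
      rw [abs_le]; constructor <;> linarith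
    simp only [hG]; linarith
  have hG1 : ∀ s, 1 ≤ G s := fun s => by linarith [hFG s, abs_nonneg (F s)]
  have hG0 : ∀ s, 0 < G s := fun s => by linarith [hG1 s]
  set K : ℝ := C₃ + C₄ with hK
  have hK0 : 0 < K := by linarith
  have hd : ∀ s, |deriv F s| ≤ K ^ (1 / r) * (G s) ^ (1 / r) := by
    intro s
    have h : |deriv F s| ^ r ≤ K * G s := by
      refine (hgrowth s).trans ?_
      nlinarith [hFG s, hG1 s]
    have h2 := Real.rpow_le_rpow (by positivity) h (by positivity : 0 ≤ 1 / r)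
    rw [← Real.rpow_mul (abs_nonneg _), mul_one_div_cancel hr0.ne', Real.rpow_one,
      Real.mul_rpow hK0.le (hG0 s).le] at h2
    exact h2
  set q : ℝ := (r - 1) / r with hq
  have hqpos : 0 < q := by positivity
  set L : ℝ := q * K ^ (1 / r) with hL
  have hL0 : 0 < L := by positivity
  have hH : ∀ s, HasDerivAt (fun x => (G x) ^ q) (deriv F s * q * (G s) ^ (q - 1)) s := by
    intro s
    have h1 : HasDerivAt G (deriv F s) s :=
      ((hF s).hasDerivAt.add_const (2 * |m|)).add_const 1
    exact h1.rpow_const (Or.inl (hG0 s).ne')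
  have hHb : ∀ s, ‖deriv F s * q * (G s) ^ (q - 1)‖ ≤ L := by
    intro s
    have hp : 0 < (G s) ^ (q - 1) := Real.rpow_pos_of_pos (hG0 s) _
    rw [Real.norm_eq_abs, abs_mul, abs_mul, abs_of_pos hqpos, abs_of_pos hp]
    calc |deriv F s| * q * (G s) ^ (q - 1)
        ≤ (K ^ (1 / r) * (G s) ^ (1 / r)) * q * (G s) ^ (q - 1) := by
          gcongr; exact hd s
      _ = L * ((G s) ^ (1 / r) * (G s) ^ (q - 1)) := by rw [hL]; ring
      _ = L := by
          rw [← Real.rpow_add (hG0 s)]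
          have : 1 / r + (q - 1) = 0 := by rw [hq]; field_simp; ring
          rw [this, Real.rpow_zero, mul_one]
  set p : ℝ := r / (r - 1) with hp
  have hp1 : 1 ≤ p := by rw [hp, le_div_iff₀ hq0]; linarith
  have hqp : q * p = 1 := by rw [hq, hp]; field_simp
  refine ⟨2 ^ (p - 1) * L ^ p, 2 ^ (p - 1) * G 0, by positivity, ?_, ?_⟩
  · have := hG0 0
    positivity
  intro s
  have hlip := Convex.norm_image_sub_le_of_norm_hasDerivWithin_le
    (fun x _ => (hH x).hasDerivWithinAt) (fun x _ => hHb x) convex_univ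
    (Set.mem_univ 0) (Set.mem_univ s)
  rw [Real.norm_eq_abs, Real.norm_eq_abs, sub_zero] at hlip
  have h1 : (G s) ^ q ≤ (G 0) ^ q + L * |s| := by
    have := le_abs_self ((G s) ^ q - (G 0) ^ q)
    linarith
  have hGq : ∀ x, ((G x) ^ q) ^ p = G x := fun x => by
    rw [← Real.rpow_mul (hG0 x).le, hqp, Real.rpow_one]
  have h0 : 0 ≤ (G 0) ^ q := Real.rpow_nonneg (hG0 0).le _
  have h2 : G s ≤ ((G 0) ^ q + L * |s|) ^ p := by
    rw [← hGq s]
    exact Real.rpow_le_rpow (Real.rpow_nonneg (hG0 s).le _) h1 (by linarith)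
  have h3 : ((G 0) ^ q + L * |s|) ^ p ≤
      2 ^ (p - 1) * (((G 0) ^ q) ^ p + (L * |s|) ^ p) := by
    have h4 := NNReal.rpow_add_le_mul_rpow_add_rpow ⟨(G 0) ^ q, h0⟩
      ⟨L * |s|, by positivity⟩ hp1
    exact_mod_cast h4
  rw [hGq, Real.mul_rpow hL0.le (abs_nonneg s)] at h3
  have := hFG s
  nlinarith
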